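/- Contour integral evaluation of the SU(2) Haar-measure projection: for complex s, t with 0 < |s|, |t| < 1, (1/(2πi)) ∮_{|z|=1} (dz/z) · (1−z^2) / ((1−tz)^2 (1−t/z)^2 (1−s)(1−s z^2)(1−s/z^2)) = (1 + s t^2) / ((1−s^2)(1−t^2)(1−s t^2)^2). -/

import Mathlib

open Complex

/-!
On the unit circle, `(1/(2πi)) ∮ dz/z` is the circle average, which is invariant under the Weyl
reflection `z ↦ z⁻¹`. Up to the factor `1 - s ^ 2`, the adjoint part of the integrand times the
measure factor `1 - z ^ 2` equals `h z⁻¹ - z ^ 2 * h z` with `h z = (1 - s * z ^ 2)⁻¹`. Since the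
fundamental part is Weyl invariant, reflecting the first term leaves `(1 - z ^ 2) * h z`, so the
poles at `±√s` are gone and only the double pole at `t` remains. Its residue is particularly simple
because `(1 - z ^ 2) / (1 - t * z) ^ 2` has vanishing derivative at `z = t`.
-/

open Metric Real

section NonVanishing

variable {a z : ℂ}

lemma one_sub_mul_ne_zero_of_norm_lt_one (ha : ‖a‖ < 1) (hz : ‖z‖ ≤ 1) : 1 - a * z ≠ 0 := by
  have hlt : ‖a * z‖ < 1 := by
    rw [norm_mul]
    exact mul_lt_one_of_nonneg_of_lt_one_left (norm_nonneg a) ha hz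
  exact (isUnit_one_sub_of_norm_lt_one hlt).ne_zero

lemma one_sub_mul_sq_ne_zero_of_norm_lt_one (ha : ‖a‖ < 1) (hz : ‖z‖ ≤ 1) :
    1 - a * z ^ 2 ≠ 0 :=
  one_sub_mul_ne_zero_of_norm_lt_one ha <| by
    rw [norm_pow]
    exact pow_le_one₀ (norm_nonneg z) hz

lemma one_sub_sq_ne_zero_of_norm_lt_one (ha : ‖a‖ < 1) : 1 - a ^ 2 ≠ 0 := by
  rw [sq]
  exact one_sub_mul_ne_zero_of_norm_lt_one ha ha.le

end NonVanishing

section CircleAverage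

lemma two_pi_I_inv_mul_circleIntegral_inv_mul (f : ℂ → ℂ) :
    (2 * π * I)⁻¹ * (∮ z in C(0, 1), z⁻¹ * f z) = circleAverage f 0 1 := by
  rw [circleAverage_eq_circleIntegral one_ne_zero]
  simp only [sub_zero, smul_eq_mul]

lemma circleAverage_sub_div_sub_sq_smul {E : Type*} [NormedAddCommGroup E] [NormedSpace ℂ E]
    [CompleteSpace E] {f : ℂ → E} {c w : ℂ} {R : ℝ}
    (hf : AnalyticOnNhd ℂ f (closedBall c R)) (hw : w ∈ ball c R) :
    circleAverage (fun z ↦ ((z - c) / (z - w) ^ 2) • f z) c R = deriv f w := by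
  have hR : 0 < R := pos_of_mem_ball hw
  have hdiff : DifferentiableOn ℂ f {z | AnalyticAt ℂ f z} :=
    fun z hz ↦ hz.differentiableAt.differentiableWithinAt
  rw [circleAverage_eq_circleIntegral hR.ne',
    ← two_pi_I_inv_smul_circleIntegral_sub_sq_inv_smul_of_differentiable
      (isOpen_analyticAt ℂ f) hf hdiff hw]
  congr 1
  refine circleIntegral.integral_congr hR.le fun z hz ↦ ?_
  have hzc : z - c ≠ 0 := sub_ne_zero.2 (ne_of_mem_sphere hz hR.ne')
  simp only [smul_smul]
  congr 1
  field_simp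

lemma circleAverage_mul_comp_inv_sub_sq_mul {g h : ℂ → ℂ}
    (hg : ContinuousOn g (sphere 0 1)) (hh : ContinuousOn h (sphere 0 1))
    (hsymm : ∀ z, g z⁻¹ = g z) :
    circleAverage (fun z ↦ g z * (h z⁻¹ - z ^ 2 * h z)) 0 1 =
      circleAverage (fun z ↦ (1 - z ^ 2) * (g z * h z)) 0 1 := by
  have hgh : CircleIntegrable (fun z ↦ g z * h z) 0 1 :=
    (hg.mul hh).circleIntegrable zero_le_one
  have hsq : CircleIntegrable (fun z ↦ z ^ 2 * (g z * h z)) 0 1 :=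
    ((continuousOn_id.pow 2).mul (hg.mul hh)).circleIntegrable zero_le_one
  have hinv : ContinuousOn (fun z : ℂ ↦ z⁻¹) (sphere 0 1) :=
    continuousOn_id.inv₀ fun z hz ↦ ne_of_mem_sphere hz one_ne_zero
  have hhinv : ContinuousOn (fun z ↦ h z⁻¹) (sphere 0 1) :=
    hh.comp hinv fun z hz ↦ by
      rw [mem_sphere_zero_iff_norm] at hz ⊢
      rw [norm_inv, hz, inv_one]
  have hreflected : CircleIntegrable (fun z ↦ g z * h z⁻¹) 0 1 :=
    (hg.mul hhinv).circleIntegrable zero_le_one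
  have hweyl : circleAverage (fun z ↦ g z * h z⁻¹) 0 1 =
      circleAverage (fun z ↦ g z * h z) 0 1 := by
    rw [← circleAverage_zero_one_congr_inv (f := fun z ↦ g z * h z)]
    simp only [hsymm]
  calc circleAverage (fun z ↦ g z * (h z⁻¹ - z ^ 2 * h z)) 0 1
    _ = circleAverage (fun z ↦ g z * h z⁻¹ - z ^ 2 * (g z * h z)) 0 1 := by
      congr 1 with z
      ring
    _ = circleAverage (fun z ↦ g z * h z) 0 1 -
          circleAverage (fun z ↦ z ^ 2 * (g z * h z)) 0 1 := by
      rw [circleAverage_fun_sub hreflected hsq, hweyl]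
    _ = circleAverage (fun z ↦ (1 - z ^ 2) * (g z * h z)) 0 1 := by
      rw [← circleAverage_fun_sub hgh hsq]
      congr 1 with z
      ring

end CircleAverage

/-- The plethystic exponential, with fugacity `t`, of two copies of the fundamental character
`z + z⁻¹` of `SU(2)`: the contribution of one flavour (a quark and an antiquark) to the Hilbert
series. -/
noncomputable def flavourSeries (t z : ℂ) : ℂ :=
  ((1 - t * z) ^ 2 * (1 - t / z) ^ 2)⁻¹

namespace flavourSeries

variable {t : ℂ}

lemma apply_inv (t z : ℂ) : flavourSeries t z⁻¹ = flavourSeries t z := by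
  simp only [flavourSeries, div_eq_mul_inv, inv_inv, mul_comm]

lemma continuousOn_sphere (ht : ‖t‖ < 1) : ContinuousOn (flavourSeries t) (sphere 0 1) := by
  have hne : ∀ z ∈ sphere (0 : ℂ) 1, z ≠ 0 := fun z hz ↦ ne_of_mem_sphere hz one_ne_zero
  refine ContinuousOn.inv₀ (by fun_prop (disch := assumption)) fun z hz ↦ ?_
  rw [mem_sphere_zero_iff_norm] at hz
  exact mul_ne_zero (pow_ne_zero 2 (one_sub_mul_ne_zero_of_norm_lt_one ht hz.le))
    (pow_ne_zero 2 (one_sub_mul_ne_zero_of_norm_lt_one ht (by rw [norm_inv, hz, inv_one])))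

lemma eq_div_sub_sq {z : ℂ} (hz : z ≠ 0) :
    flavourSeries t z = z / (z - t) ^ 2 * (z / (1 - t * z) ^ 2) := by
  rw [flavourSeries, one_sub_div hz, div_pow, mul_inv, inv_div]
  ring

end flavourSeries

lemma hasDerivAt_one_sub_sq_div_one_sub_mul_sq {t : ℂ} (ht : 1 - t ^ 2 ≠ 0) :
    HasDerivAt (fun z ↦ (1 - z ^ 2) / (1 - t * z) ^ 2) 0 t := by
  have hden : 1 - t * t ≠ 0 := by rwa [← sq]
  have hnum : HasDerivAt (fun z : ℂ ↦ 1 - z ^ 2) (-(2 * t)) t := by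
    simpa using (hasDerivAt_pow 2 t).const_sub 1
  have hlin : HasDerivAt (fun z : ℂ ↦ 1 - t * z) (-t) t := by
    simpa using ((hasDerivAt_id t).const_mul t).const_sub 1
  refine (hnum.div (hlin.pow 2) (pow_ne_zero 2 hden)).congr_deriv ?_
  simp only [Pi.pow_apply]
  field_simp
  ring

lemma circleAverage_one_sub_sq_mul_flavourSeries_mul {f : ℂ → ℂ} {t : ℂ}
    (hf : AnalyticOnNhd ℂ f (closedBall 0 1)) (ht : ‖t‖ < 1) :
    circleAverage (fun z ↦ (1 - z ^ 2) * (flavourSeries t z * f z)) 0 1 =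
      deriv (fun z ↦ z * f z) t / (1 - t ^ 2) := by
  set q : ℂ → ℂ := fun z ↦ (1 - z ^ 2) / (1 - t * z) ^ 2
  have ht' : 1 - t ^ 2 ≠ 0 := one_sub_sq_ne_zero_of_norm_lt_one ht
  have htball : t ∈ ball (0 : ℂ) 1 := mem_ball_zero_iff.2 ht
  have hzf : AnalyticOnNhd ℂ (fun z ↦ z * f z) (closedBall 0 1) := analyticOnNhd_id.mul hf
  have hq : AnalyticOnNhd ℂ q (closedBall 0 1) := fun z hz ↦
    AnalyticAt.fun_div (by fun_prop) (by fun_prop) <| pow_ne_zero 2 <|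
      one_sub_mul_ne_zero_of_norm_lt_one ht (mem_closedBall_zero_iff.1 hz)
  calc circleAverage (fun z ↦ (1 - z ^ 2) * (flavourSeries t z * f z)) 0 1
    _ = circleAverage (fun z ↦ ((z - 0) / (z - t) ^ 2) • (z * f z * q z)) 0 1 := by
      refine circleAverage_congr_sphere fun z hz ↦ ?_
      rw [abs_one] at hz
      simp only [flavourSeries.eq_div_sub_sq (ne_of_mem_sphere hz one_ne_zero), q, sub_zero,
        smul_eq_mul]
      ring
    _ = deriv (fun z ↦ z * f z * q z) t :=
      circleAverage_sub_div_sub_sq_smul (hzf.mul hq) htball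
    _ = deriv (fun z ↦ z * f z) t * q t := by
      have hderiv := (hzf t (ball_subset_closedBall htball)).differentiableAt.hasDerivAt.mul
        (hasDerivAt_one_sub_sq_div_one_sub_mul_sq ht')
      rw [mul_zero, add_zero] at hderiv
      exact hderiv.deriv
    _ = deriv (fun z ↦ z * f z) t / (1 - t ^ 2) := by
      simp only [q, ← sq]
      field_simp

lemma one_sub_sq_div_adjoint_eq {s z : ℂ} (hs : ‖s‖ < 1) (hz : ‖z‖ = 1) :
    (1 - z ^ 2) / ((1 - s) * (1 - s * z ^ 2) * (1 - s / z ^ 2)) =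
      (1 - s ^ 2)⁻¹ * ((1 - s * z⁻¹ ^ 2)⁻¹ - z ^ 2 * (1 - s * z ^ 2)⁻¹) := by
  have hz0 : z ≠ 0 := ne_zero_of_norm_ne_zero (hz ▸ one_ne_zero)
  have hden : 1 - s * z ^ 2 ≠ 0 := one_sub_mul_sq_ne_zero_of_norm_lt_one hs hz.le
  have hden_inv : 1 - s * z⁻¹ ^ 2 ≠ 0 :=
    one_sub_mul_sq_ne_zero_of_norm_lt_one hs (by rw [norm_inv, hz, inv_one])
  have hfactor : 1 - s ^ 2 = (1 - s) * (1 + s) := by ring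
  have hs1 : 1 + s ≠ 0 :=
    right_ne_zero_of_mul (hfactor ▸ one_sub_sq_ne_zero_of_norm_lt_one hs)
  have hnum : (1 - s * z ^ 2) - z ^ 2 * (1 - s * z⁻¹ ^ 2) = (1 + s) * (1 - z ^ 2) := by
    field_simp
    ring
  calc (1 - z ^ 2) / ((1 - s) * (1 - s * z ^ 2) * (1 - s / z ^ 2))
    _ = (1 + s) * (1 - z ^ 2) / ((1 - s * z ^ 2) * (1 - s * z⁻¹ ^ 2) * (1 - s ^ 2)) := by
      rw [← mul_div_mul_left _ _ hs1, div_eq_mul_inv s, ← inv_pow, hfactor]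
      congr 1
      ring
    _ = (1 - s ^ 2)⁻¹ * (((1 - s * z ^ 2) - z ^ 2 * (1 - s * z⁻¹ ^ 2)) /
          ((1 - s * z ^ 2) * (1 - s * z⁻¹ ^ 2))) := by
      rw [hnum, inv_mul_eq_div, div_div]
    _ = (1 - s ^ 2)⁻¹ * ((1 - s * z⁻¹ ^ 2)⁻¹ - z ^ 2 * (1 - s * z ^ 2)⁻¹) := by
      rw [sub_div, div_mul_cancel_left₀ hden, mul_div_mul_right _ _ hden_inv,
        div_eq_mul_inv (z ^ 2)]

lemma one_sub_sq_div_flavour_mul_adjoint_eq {s z : ℂ} (t : ℂ) (hs : ‖s‖ < 1) (hz : ‖z‖ = 1) :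
    (1 - z ^ 2) /
        ((1 - t * z) ^ 2 * (1 - t / z) ^ 2 * (1 - s) * (1 - s * z ^ 2) * (1 - s / z ^ 2)) =
      (1 - s ^ 2)⁻¹ *
        (flavourSeries t z * ((1 - s * z⁻¹ ^ 2)⁻¹ - z ^ 2 * (1 - s * z ^ 2)⁻¹)) := by
  rw [mul_left_comm, ← one_sub_sq_div_adjoint_eq hs hz, flavourSeries, inv_mul_eq_div, div_div]
  congr 1
  ring

lemma deriv_mul_inv_one_sub_mul_sq {s t : ℂ} (h : 1 - s * t ^ 2 ≠ 0) :
    deriv (fun z ↦ z * (1 - s * z ^ 2)⁻¹) t = (1 + s * t ^ 2) / (1 - s * t ^ 2) ^ 2 := by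
  have hden : HasDerivAt (fun z : ℂ ↦ 1 - s * z ^ 2) (-(s * (2 * t))) t := by
    simpa using ((hasDerivAt_pow 2 t).const_mul s).const_sub 1
  refine (((hasDerivAt_id' t).mul (hden.inv h)).congr_deriv ?_).deriv
  simp only [Pi.inv_apply]
  field_simp
  ring

/-- Contour integral evaluation of the SU(2) Haar-measure projection: for `0 < |s|, |t| < 1`,
`(1/(2πi)) ∮_{|z|=1} (dz/z) (1−z^2)/((1−tz)^2 (1−t/z)^2 (1−s)(1−s z^2)(1−s/z^2))
  = (1 + s t^2)/((1−s^2)(1−t^2)(1−s t^2)^2)`. -/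
theorem su2_molien_weyl_integral (s t : ℂ)
    (hs0 : 0 < ‖s‖) (hs1 : ‖s‖ < 1) (ht0 : 0 < ‖t‖) (ht1 : ‖t‖ < 1) :
    (2 * (Real.pi : ℂ) * Complex.I)⁻¹ *
        (∮ z in C(0, 1), z⁻¹ *
          ((1 - z ^ 2) /
            ((1 - t * z) ^ 2 * (1 - t / z) ^ 2 * (1 - s) * (1 - s * z ^ 2) * (1 - s / z ^ 2))))
      = (1 + s * t ^ 2) / ((1 - s ^ 2) * (1 - t ^ 2) * (1 - s * t ^ 2) ^ 2) := by
  set h : ℂ → ℂ := fun z ↦ (1 - s * z ^ 2)⁻¹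
  have hh : AnalyticOnNhd ℂ h (closedBall 0 1) := fun z hz ↦ AnalyticAt.fun_inv (by fun_prop)
    (one_sub_mul_sq_ne_zero_of_norm_lt_one hs1 (mem_closedBall_zero_iff.1 hz))
  have hintegrand : Set.EqOn _
      (fun z ↦ (1 - s ^ 2)⁻¹ • (flavourSeries t z * (h z⁻¹ - z ^ 2 * h z))) (sphere 0 |1|) :=
    fun z hz ↦ one_sub_sq_div_flavour_mul_adjoint_eq t hs1
      (mem_sphere_zero_iff_norm.1 (abs_one (α := ℝ) ▸ hz))
  rw [two_pi_I_inv_mul_circleIntegral_inv_mul, circleAverage_congr_sphere hintegrand,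
    circleAverage_fun_smul,
    circleAverage_mul_comp_inv_sub_sq_mul (flavourSeries.continuousOn_sphere ht1)
      (hh.continuousOn.mono sphere_subset_closedBall) (flavourSeries.apply_inv t),
    circleAverage_one_sub_sq_mul_flavourSeries_mul hh ht1,
    deriv_mul_inv_one_sub_mul_sq (one_sub_mul_sq_ne_zero_of_norm_lt_one hs1 ht1.le), smul_eq_mul,
    inv_mul_eq_div, div_div, div_div]
  congr 1
  ring
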